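/- For any deviability density ρ on S and any subset A' ⊆ A, the function x ↦ Φ_ρ(A',x) = sup_{a∈A'} ρ(a) Π(a,x) is continuous on S and upper compact, i.e. the set {x ∈ S : Φ_ρ(A',x) ≥ γ} is compact for every γ > 0. -/

import Mathlib

open Filter Topology Metric Set MeasureTheory
open scoped NNReal

noncomputable section

/-- A deviability density on a topological space `E`. -/
def IsDeviabilityDensity {E : Type*} [TopologicalSpace E] (p : E → ℝ) : Prop :=
  (∀ x, p x ∈ Set.Icc (0:ℝ) 1) ∧ (⨆ x, p x) = 1 ∧
    ∀ γ ∈ Set.Ioc (0:ℝ) 1, IsCompact {x | γ ≤ p x}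

variable {S : Type*} [MetricSpace S]

/-- Time shift `θ_s` on continuous paths. -/
def pshift (s : ℝ≥0) (X : C(ℝ≥0, S)) : C(ℝ≥0, S) :=
  ⟨fun t => X (s + t), X.continuous.comp (continuous_const.add continuous_id)⟩

/-- `Π_{x,t}(y)`. -/
def transDen (Px : S → C(ℝ≥0, S) → ℝ) (x : S) (t : ℝ≥0) (y : S) : ℝ :=
  ⨆ X ∈ {X : C(ℝ≥0, S) | X t = y}, Px x X

/-- The standing assumptions (2.2)--(2.5) of the paper, together with the basic
assumptions on the family of path deviability densities `Px` and the set `A`. -/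
structure DevSetup (S : Type*) [MetricSpace S] (Px : S → C(ℝ≥0, S) → ℝ) (A : Set S) :
    Prop where
  dev : ∀ x, IsDeviabilityDensity (Px x)
  start : ∀ x (X : C(ℝ≥0, S)), X 0 ≠ x → Px x X = 0
  /-- (2.2) upper semicontinuity -/
  usc : UpperSemicontinuous (fun q : S × C(ℝ≥0, S) => Px q.1 q.2)
  /-- (2.2) uniform upper compactness -/
  cpt : ∀ K : Set S, IsCompact K → ∀ γ ∈ Set.Ioc (0:ℝ) 1,
    IsCompact (⋃ x ∈ K, {X : C(ℝ≥0, S) | γ ≤ Px x X})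
  /-- (2.3) the maxitive Markov property -/
  markov : ∀ x (X : C(ℝ≥0, S)) (s : ℝ≥0),
    Px x X = (⨆ X' ∈ {X' : C(ℝ≥0, S) | ∀ u ≤ s, X' u = X u}, Px x X') *
      Px (X s) (pshift s X)
  /-- (2.4) `A` is locally finite -/
  locFin : ∀ K : Set S, IsCompact K → (K ∩ A).Finite
  /-- (2.4)(i) -/
  attract : ∀ x (X : C(ℝ≥0, S)), Px x X = 1 → (⨅ t : ℝ≥0, infDist (X t) A) = 0
  /-- (2.4)(ii) -/
  equil : ∀ a ∈ A, Px a (ContinuousMap.const ℝ≥0 a) = 1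
  /-- (2.4)(iii) -/
  connect : ∀ a ∈ A, ∀ a' ∈ A, ∃ t : ℝ≥0, 0 < t ∧ 0 < transDen Px a t a'
  /-- (2.4)(iv) -/
  nearA : ∀ ε : ℝ, 0 < ε → ∃ δ : ℝ, 0 < δ ∧ ∀ x : S, infDist x A < δ →
    ∃ s₀ s₁ : ℝ≥0, 0 < s₀ ∧ 0 < s₁ ∧ ∃ a ∈ A,
      1 - ε < transDen Px x s₀ a ∧ 1 - ε < transDen Px a s₁ x
  /-- (2.4)(v) -/
  localMove : ∀ x : S, ∀ ε : ℝ, 0 < ε → ∃ δ : ℝ, 0 < δ ∧ ∃ t₀ t₁ : ℝ≥0,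
    ∀ x' : S, dist x x' < δ →
      1 - ε < transDen Px x t₀ x' ∧ 1 - ε < transDen Px x' t₁ x
  /-- (2.5) uniform tightness -/
  tight : ∀ K₁ : Set S, IsCompact K₁ → ∀ ε : ℝ, 0 < ε → ∃ K₂ : Set S, IsCompact K₂ ∧
    Filter.limsup (fun t : ℝ≥0 => ⨆ x ∈ K₁, ⨆ y ∈ K₂ᶜ, transDen Px x t y) atTop < ε

/-!
Concatenating paths in the Markov property gives `Π_{x,s}(y) Π_{y,t}(z) ≤ Π_{x,s+t}(z)`. Letting
`s → ∞` yields `Π(a,x) Π_{x,t}(y) ≤ Π(a,y)`, hence `Φ(x) Π_{x,t}(y) ≤ Φ(y)` for `Φ = Φ_ρ(A',·)`.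
Nearby points reach each other with deviability close to `1`, so `Φ` is continuous.
If `Φ(x) ≥ γ`, then some `a` has both `ρ(a) > γ/2` and `Π(a,x) > γ/2`; such `a` lie in the compact
set `{ρ ≥ γ/2}`, so tightness confines `x` to a compact set.
-/

section RealSup

variable {ι : Type*} {s : Set ι} {f : ι → ℝ} {c : ℝ}

lemma le_real_biSup (hf : BddAbove (f '' s)) {i : ι} (hi : i ∈ s) : f i ≤ ⨆ j ∈ s, f j := by
  refine le_ciSup₂ (f := fun j (_ : j ∈ s) => f j) (hf.mono ?_) i hi
  rintro _ ⟨_, ⟨j, rfl⟩, hj, rfl⟩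
  exact ⟨j, hj, rfl⟩

lemma real_biSup_le (hc : 0 ≤ c) (h : ∀ i ∈ s, f i ≤ c) : ⨆ i ∈ s, f i ≤ c :=
  Real.iSup_le (fun i => Real.iSup_le (h i) hc) hc

lemma real_biSup_nonneg (h : ∀ i ∈ s, 0 ≤ f i) : 0 ≤ ⨆ i ∈ s, f i :=
  Real.iSup_nonneg fun i => Real.iSup_nonneg (h i)

lemma real_biSup_mul {r : ℝ} (hr : 0 ≤ r) : (⨆ i ∈ s, f i) * r = ⨆ i ∈ s, f i * r := by
  simp only [Real.iSup_mul_of_nonneg hr]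

lemma real_biSup_mul_biSup_le {κ : Type*} {t : Set κ} {g : κ → ℝ} (hf : ∀ i ∈ s, 0 ≤ f i)
    (hg : ∀ j ∈ t, 0 ≤ g j) (hc : 0 ≤ c) (h : ∀ i ∈ s, ∀ j ∈ t, f i * g j ≤ c) :
    (⨆ i ∈ s, f i) * (⨆ j ∈ t, g j) ≤ c := by
  rw [real_biSup_mul (real_biSup_nonneg hg)]
  refine real_biSup_le hc fun i hi => ?_
  rw [mul_comm, real_biSup_mul (hf i hi)]
  exact real_biSup_le hc fun j hj => mul_comm (f i) (g j) ▸ h i hi j hj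

lemma eventually_forall_lt_of_limsup_biSup_lt {κ T : Type*} {t : Set κ} {l : Filter T}
    {F : T → ι → κ → ℝ} {b : ℝ} (hF : ∀ u, ∀ i ∈ s, ∀ j ∈ t, F u i j ≤ b)
    (h : limsup (fun u => ⨆ i ∈ s, ⨆ j ∈ t, F u i j) l < c) :
    ∀ᶠ u in l, ∀ i ∈ s, ∀ j ∈ t, F u i j < c := by
  have inner_le (u : T) : ∀ i ∈ s, ⨆ j ∈ t, F u i j ≤ max b 0 := fun i hi =>
    real_biSup_le (le_max_right b 0) fun j hj => (hF u i hi j hj).trans (le_max_left b 0)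
  have outer_le (u : T) : ⨆ i ∈ s, ⨆ j ∈ t, F u i j ≤ max b 0 :=
    real_biSup_le (le_max_right b 0) (inner_le u)
  filter_upwards [eventually_lt_of_limsup_lt h (isBoundedUnder_of ⟨_, outer_le⟩)]
    with u hu i hi j hj
  calc F u i j ≤ ⨆ j ∈ t, F u i j :=
        le_real_biSup ⟨b, forall_mem_image.2 (hF u i hi)⟩ hj
    _ ≤ ⨆ i ∈ s, ⨆ j ∈ t, F u i j :=
        le_real_biSup (f := fun i => ⨆ j ∈ t, F u i j)
          ⟨_, forall_mem_image.2 (inner_le u)⟩ hi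
    _ < c := hu

end RealSup

lemma continuous_of_eventually_mul_le {E : Type*} [TopologicalSpace E] {f : E → ℝ}
    (h : ∀ x, ∀ c ∈ Ioo (0 : ℝ) 1, ∀ᶠ y in 𝓝 x, f x * c ≤ f y ∧ f y * c ≤ f x) :
    Continuous f := by
  have mul_tendsto (r : ℝ) : Tendsto (fun c : ℝ => r * c) (𝓝[<] 1) (𝓝 r) := by
    simpa using! tendsto_nhdsWithin_of_tendsto_nhds ((continuous_const_mul r).tendsto 1)
  have exists_lt_mul {b r : ℝ} (hbr : b < r) : ∃ c ∈ Ioo (0 : ℝ) 1, b < r * c :=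
    (((mul_tendsto r).eventually_const_lt hbr).and
      (Ioo_mem_nhdsLT zero_lt_one)).exists.imp fun _ hc => hc.symm
  refine continuous_iff_continuousAt.2 fun x => tendsto_order.2 ⟨fun b hb => ?_, fun b hb => ?_⟩
  · obtain ⟨c, hc, hbc⟩ := exists_lt_mul hb
    exact (h x c hc).mono fun y hy => hbc.trans_le hy.1
  · obtain ⟨c, hc, hbc⟩ := exists_lt_mul hb
    exact (h x c hc).mono fun y hy => lt_of_mul_lt_mul_right (hy.2.trans_lt hbc) hc.1.le

lemma IsDeviabilityDensity.isCompact_superlevel {E : Type*} [TopologicalSpace E] {p : E → ℝ}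
    (hp : IsDeviabilityDensity p) {γ : ℝ} (hγ : 0 < γ) : IsCompact {x | γ ≤ p x} := by
  rcases le_or_gt γ 1 with hγ1 | hγ1
  · exact hp.2.2 γ ⟨hγ, hγ1⟩
  · convert isCompact_empty
    exact eq_empty_of_forall_notMem fun x hx => (hγ1.trans_le hx).not_ge (hp.1 x).2

section MaxitiveImage

variable {α β : Type*} {Q : α → β → ℝ} {ρ : α → ℝ} {A : Set α} {x y : β}

/-- The image under the kernel `Q` of the density `ρ` restricted to `A`, with a supremum
in place of the integral. For the limiting kernel `Π` it is the paper's `Φ_ρ(A,·)`. The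
real-valued `⨆ a ∈ A` also ranges over a value `0` for each `a ∉ A`, harmless for densities. -/
def maxitiveImage (Q : α → β → ℝ) (ρ : α → ℝ) (A : Set α) (y : β) : ℝ :=
  ⨆ a ∈ A, ρ a * Q a y

lemma maxitiveImage_mul_le (hρ : ∀ a ∈ A, ρ a ∈ Icc 0 1) (hQ : ∀ a ∈ A, Q a y ∈ Icc 0 1)
    {p : ℝ} (hp : 0 ≤ p) (h : ∀ a ∈ A, Q a x * p ≤ Q a y) :
    maxitiveImage Q ρ A x * p ≤ maxitiveImage Q ρ A y := by
  have term_nonneg : ∀ a ∈ A, 0 ≤ ρ a * Q a y := fun a ha =>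
    mul_nonneg (hρ a ha).1 (hQ a ha).1
  have term_bdd : BddAbove ((fun a => ρ a * Q a y) '' A) :=
    ⟨1, forall_mem_image.2 fun a ha => mul_le_one₀ (hρ a ha).2 (hQ a ha).1 (hQ a ha).2⟩
  unfold maxitiveImage
  rw [real_biSup_mul hp]
  refine real_biSup_le (real_biSup_nonneg term_nonneg) fun a ha => ?_
  calc ρ a * Q a x * p = ρ a * (Q a x * p) := mul_assoc _ _ _
    _ ≤ ρ a * Q a y := mul_le_mul_of_nonneg_left (h a ha) (hρ a ha).1
    _ ≤ ⨆ a ∈ A, ρ a * Q a y := le_real_biSup (f := fun a => ρ a * Q a y) term_bdd ha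

lemma maxitiveImage_le_of_forall_superlevel (hρ : ∀ a ∈ A, ρ a ∈ Icc 0 1)
    (hQ : ∀ a ∈ A, Q a y ∈ Icc 0 1) {c : ℝ} (hc : 0 ≤ c)
    (h : ∀ a ∈ A, c ≤ ρ a → Q a y ≤ c) : maxitiveImage Q ρ A y ≤ c := by
  refine real_biSup_le hc fun a ha => ?_
  rcases le_total c (ρ a) with hca | hac
  · exact (mul_le_of_le_one_left (hQ a ha).1 (hρ a ha).2).trans (h a ha hca)
  · exact (mul_le_of_le_one_right (hρ a ha).1 (hQ a ha).2).trans hac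

lemma continuous_maxitiveImage [TopologicalSpace β] (hρ : ∀ a ∈ A, ρ a ∈ Icc 0 1)
    (hQ : ∀ a ∈ A, ∀ y, Q a y ∈ Icc 0 1)
    (h : ∀ x, ∀ c ∈ Ioo (0 : ℝ) 1, ∀ᶠ y in 𝓝 x,
      ∀ a ∈ A, Q a x * c ≤ Q a y ∧ Q a y * c ≤ Q a x) :
    Continuous (maxitiveImage Q ρ A) :=
  continuous_of_eventually_mul_le fun x c hc => (h x c hc).mono fun y hxy =>
    ⟨maxitiveImage_mul_le hρ (fun a ha => hQ a ha y) hc.1.le fun a ha => (hxy a ha).1,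
      maxitiveImage_mul_le hρ (fun a ha => hQ a ha x) hc.1.le fun a ha => (hxy a ha).2⟩

lemma isCompact_superlevel_maxitiveImage [TopologicalSpace α] [TopologicalSpace β]
    (hρ : IsDeviabilityDensity ρ) (hQ : ∀ a ∈ A, ∀ y, Q a y ∈ Icc 0 1)
    (htight : ∀ K₁ : Set α, IsCompact K₁ → ∀ ε > 0, ∃ K₂ : Set β, IsCompact K₂ ∧
      ∀ a ∈ K₁, ∀ y ∉ K₂, Q a y ≤ ε)
    (hcont : Continuous (maxitiveImage Q ρ A)) {γ : ℝ} (hγ : 0 < γ) :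
    IsCompact {y | γ ≤ maxitiveImage Q ρ A y} := by
  obtain ⟨K, hK, hQK⟩ :=
    htight {a | γ / 2 ≤ ρ a} (hρ.isCompact_superlevel (half_pos hγ)) (γ / 2) (half_pos hγ)
  refine hK.of_isClosed_subset (isClosed_le continuous_const hcont) fun y hy => ?_
  by_contra hyK
  have image_le_half : maxitiveImage Q ρ A y ≤ γ / 2 :=
    maxitiveImage_le_of_forall_superlevel (fun a _ => hρ.1 a) (fun a ha => hQ a ha y)
      (half_pos hγ).le fun a _ ha => hQK a ha y hyK
  exact (half_lt_self hγ).not_ge (le_trans hy image_le_half)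

end MaxitiveImage

section LimitKernel

variable {E T : Type*} [Preorder T] {P : E → T → E → ℝ} {Q : E → E → ℝ}
  [Add T] [CanonicallyOrderedAdd T] [(atTop : Filter T).NeBot]

lemma limit_mul_kernel_le (hmul : ∀ x y z s t, P x s y * P y t z ≤ P x (s + t) z)
    (hPQ : ∀ x y, Tendsto (fun t => P x t y) atTop (𝓝 (Q x y))) (a x y : E) (t : T) :
    Q a x * P x t y ≤ Q a y := by
  have add_tendsto : Tendsto (fun s : T => s + t) atTop atTop :=
    tendsto_atTop_mono (fun _ => le_self_add) tendsto_id
  exact le_of_tendsto_of_tendsto' ((hPQ a x).mul_const (P x t y))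
    ((hPQ a y).comp add_tendsto) fun s => hmul a x y s t

theorem stmt5_general [TopologicalSpace E] (hP : ∀ x t y, P x t y ∈ Icc 0 1)
    (hmul : ∀ x y z s t, P x s y * P y t z ≤ P x (s + t) z)
    (hmove : ∀ x, ∀ c ∈ Ioo (0 : ℝ) 1, ∀ᶠ y in 𝓝 x, (∃ t, c ≤ P x t y) ∧ ∃ t, c ≤ P y t x)
    (htight : ∀ K₁ : Set E, IsCompact K₁ → ∀ ε > 0, ∃ K₂ : Set E, IsCompact K₂ ∧
      ∀ᶠ t in atTop, ∀ x ∈ K₁, ∀ y ∉ K₂, P x t y < ε)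
    (hPQ : ∀ x y, Tendsto (fun t => P x t y) atTop (𝓝 (Q x y)))
    {ρ : E → ℝ} (hρ : IsDeviabilityDensity ρ) (A : Set E) :
    Continuous (maxitiveImage Q ρ A) ∧
      ∀ γ : ℝ, 0 < γ → IsCompact {x | γ ≤ maxitiveImage Q ρ A x} := by
  have hQ : ∀ a ∈ A, ∀ y, Q a y ∈ Icc 0 1 := fun a _ y =>
    isClosed_Icc.mem_of_tendsto (hPQ a y) (.of_forall fun t => hP a t y)
  have mul_le_of_le {c : ℝ} {t : T} {x y : E} (hc : c ≤ P x t y) :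
      ∀ a ∈ A, Q a x * c ≤ Q a y := fun a ha =>
    (mul_le_mul_of_nonneg_left hc (hQ a ha x).1).trans (limit_mul_kernel_le hmul hPQ a x y t)
  have hcont : Continuous (maxitiveImage Q ρ A) := by
    refine continuous_maxitiveImage (fun a _ => hρ.1 a) hQ fun x c hc => ?_
    filter_upwards [hmove x c hc] with y ⟨⟨t, hxy⟩, ⟨u, hyx⟩⟩ a ha
    exact ⟨mul_le_of_le hxy a ha, mul_le_of_le hyx a ha⟩
  refine ⟨hcont, fun γ => isCompact_superlevel_maxitiveImage hρ hQ (fun K₁ hK₁ ε hε => ?_) hcont⟩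
  obtain ⟨K₂, hK₂, hlt⟩ := htight K₁ hK₁ ε hε
  exact ⟨K₂, hK₂, fun a ha y hy =>
    le_of_tendsto (hPQ a y) (hlt.mono fun t ht => (ht a ha y hy).le)⟩

end LimitKernel

section PathConcatenation

/-- The path that follows `X` up to time `s` and then `Y` started afresh at time `s`; it realises
a product of two transition densities by a single path. -/
def pathConcat (s : ℝ≥0) (X Y : C(ℝ≥0, S)) (h : X s = Y 0) : C(ℝ≥0, S) where
  toFun u := if u ≤ s then X u else Y (u - s)
  continuous_toFun :=
    X.continuous.if_le (Y.continuous.comp (by fun_prop)) continuous_id continuous_const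
      (by rintro u rfl; simpa using h)

variable {s : ℝ≥0} {X Y : C(ℝ≥0, S)}

lemma pathConcat_apply_of_le (h : X s = Y 0) {u : ℝ≥0} (hu : u ≤ s) :
    pathConcat s X Y h u = X u :=
  if_pos hu

lemma pathConcat_apply_add (h : X s = Y 0) (t : ℝ≥0) : pathConcat s X Y h (s + t) = Y t := by
  rcases eq_or_ne t 0 with rfl | ht
  · rw [add_zero, pathConcat_apply_of_le h le_rfl, h]
  · simp [pathConcat, ht]

lemma pshift_pathConcat (h : X s = Y 0) : pshift s (pathConcat s X Y h) = Y :=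
  ContinuousMap.ext (pathConcat_apply_add h)

end PathConcatenation

section TransitionDensity

variable {Px : S → C(ℝ≥0, S) → ℝ} {A : Set S}

lemma le_transDen {x : S} (hPx : BddAbove (range (Px x))) (t : ℝ≥0) (X : C(ℝ≥0, S)) :
    Px x X ≤ transDen Px x t (X t) :=
  le_real_biSup (s := {X' : C(ℝ≥0, S) | X' t = X t}) (hPx.mono (image_subset_range _ _)) rfl

namespace DevSetup

lemma bddAbove_range (hyp : DevSetup S Px A) (x : S) : BddAbove (range (Px x)) :=
  ⟨1, forall_mem_range.2 fun X => ((hyp.dev x).1 X).2⟩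

lemma transDen_mem_Icc (hyp : DevSetup S Px A) (x : S) (t : ℝ≥0) (y : S) :
    transDen Px x t y ∈ Icc 0 1 :=
  ⟨real_biSup_nonneg fun X _ => ((hyp.dev x).1 X).1,
    real_biSup_le zero_le_one fun X _ => ((hyp.dev x).1 X).2⟩

lemma mul_le_pathConcat (hyp : DevSetup S Px A) (x : S) {s : ℝ≥0} {X Y : C(ℝ≥0, S)}
    (h : X s = Y 0) : Px x X * Px (Y 0) Y ≤ Px x (pathConcat s X Y h) := by
  have prefix_le : Px x X ≤
      ⨆ X' ∈ {X' : C(ℝ≥0, S) | ∀ u ≤ s, X' u = pathConcat s X Y h u}, Px x X' :=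
    le_real_biSup ((hyp.bddAbove_range x).mono (image_subset_range _ _))
      fun u hu => (pathConcat_apply_of_le h hu).symm
  rw [hyp.markov x (pathConcat s X Y h) s, pshift_pathConcat, pathConcat_apply_of_le h le_rfl, h]
  exact mul_le_mul_of_nonneg_right prefix_le ((hyp.dev (Y 0)).1 Y).1

lemma transDen_mul_transDen_le (hyp : DevSetup S Px A) (x y z : S) (s t : ℝ≥0) :
    transDen Px x s y * transDen Px y t z ≤ transDen Px x (s + t) z := by
  have target_nonneg := (hyp.transDen_mem_Icc x (s + t) z).1
  refine real_biSup_mul_biSup_le (fun X _ => ((hyp.dev x).1 X).1)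
    (fun Y _ => ((hyp.dev y).1 Y).1) target_nonneg ?_
  rintro X rfl Y rfl
  rcases eq_or_ne (Y 0) (X s) with hYX | hYX
  · rw [← hYX, ← pathConcat_apply_add hYX.symm t]
    exact (hyp.mul_le_pathConcat x hYX.symm).trans (le_transDen (hyp.bddAbove_range x) _ _)
  · rwa [hyp.start (X s) Y hYX, mul_zero]

lemma eventually_exists_le_transDen (hyp : DevSetup S Px A) (x : S) {c : ℝ} (hc : c < 1) :
    ∀ᶠ y in 𝓝 x, (∃ t, c ≤ transDen Px x t y) ∧ ∃ t, c ≤ transDen Px y t x := by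
  obtain ⟨δ, hδ, t₀, t₁, hmove⟩ := hyp.localMove x (1 - c) (sub_pos.2 hc)
  rw [sub_sub_cancel] at hmove
  filter_upwards [ball_mem_nhds x hδ] with y hy
  obtain ⟨hxy, hyx⟩ := hmove y (mem_ball'.1 hy)
  exact ⟨⟨t₀, hxy.le⟩, ⟨t₁, hyx.le⟩⟩

lemma exists_isCompact_eventually_transDen_lt (hyp : DevSetup S Px A) {K₁ : Set S}
    (hK₁ : IsCompact K₁) {ε : ℝ} (hε : 0 < ε) : ∃ K₂ : Set S, IsCompact K₂ ∧
      ∀ᶠ t in atTop, ∀ x ∈ K₁, ∀ y ∉ K₂, transDen Px x t y < ε := by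
  obtain ⟨K₂, hK₂, hlim⟩ := hyp.tight K₁ hK₁ ε hε
  exact ⟨K₂, hK₂, eventually_forall_lt_of_limsup_biSup_lt
    (fun t x _ y _ => (hyp.transDen_mem_Icc x t y).2) hlim⟩

end DevSetup

end TransitionDensity

theorem stmt5 (Px : S → C(ℝ≥0, S) → ℝ) (A : Set S) (hyp : DevSetup S Px A)
    (PL : S → S → ℝ)
    (hPL : ∀ x y : S, Tendsto (fun t : ℝ≥0 => transDen Px x t y) atTop (𝓝 (PL x y)))
    (ρ : S → ℝ) (hρ : IsDeviabilityDensity ρ) (A' : Set S) (hA' : A' ⊆ A) :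
    Continuous (fun x : S => ⨆ a ∈ A', ρ a * PL a x) ∧
    ∀ γ : ℝ, 0 < γ → IsCompact {x : S | γ ≤ ⨆ a ∈ A', ρ a * PL a x} :=
  stmt5_general hyp.transDen_mem_Icc hyp.transDen_mul_transDen_le
    (fun x _ hc => hyp.eventually_exists_le_transDen x hc.2)
    (fun _ hK₁ _ hε => hyp.exists_isCompact_eventually_transDen_lt hK₁ hε) hPL hρ A'
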